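/- For every integer a: ψ'(γ^a R'_1) = −2^{3s} + 2^{2s} − 1 if a mod M ∈ T_1, and ψ'(γ^a R'_1) = 2^{2s} − 1 otherwise; ψ'(γ^a R'_2) = 2^{s−1}(2^s + 1)(−2^{2s} + 2^s − 1) if a ≡ 0 (mod M), ψ'(γ^a R'_2) = 2^{s−1}(2^{2s} − 1) if a mod M ∈ T_1, and ψ'(γ^a R'_2) = −2^{s−1} otherwise; ψ'(γ^a R'_3) = 2^{s−1}(2^s − 1)(2^{2s} + 2^s − 1) if a ≡ 0 (mod M), ψ'(γ^a R'_3) = 2^{s−1}(2^s − 1)² if a mod M ∈ T_1, and ψ'(γ^a R'_3) = 2^{s−1}(1 − 2^{s+1}) otherwise. -/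

import Mathlib

noncomputable section

open scoped BigOperators

/-- `M = 2^{2s} + 2^s + 1`. -/
abbrev Mof (s : ℕ) : ℕ := 2 ^ (2 * s) + 2 ^ s + 1

/-- The relative trace from `F` (of order `2^{3s}`) to its subfield `E` of order `2^s`:
`Tr_{F/E}(x) = x + x^{2^s} + x^{2^{2s}}`, viewed as a map `F → F`. -/
def trFE {F : Type*} [Field F] (s : ℕ) (x : F) : F :=
  x + x ^ (2 ^ s) + x ^ (2 ^ (2 * s))

/-- `ψ(x) = 1` if the absolute trace `Tr_{F/𝔽₂}(x) = 0`, and `-1` otherwise. -/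
def psi (F : Type*) [Field F] [Algebra (ZMod 2) F] (x : F) : ℤ :=
  if Algebra.trace (ZMod 2) F x = 0 then 1 else -1

/-- `ψ(cS) = ∑_{x ∈ S} ψ(c·x)`. -/
def psiSum (F : Type*) [Field F] [Algebra (ZMod 2) F] (c : F) (S : Set F) : ℤ :=
  ∑ᶠ x ∈ S, psi F (c * x)

/-- `D = {u ∈ F^× : Tr_{F/E}(u⁻¹) = 0}`. -/
def Dset (F : Type*) [Field F] (s : ℕ) : Set F :=
  {u | u ≠ 0 ∧ trFE s u⁻¹ = 0}

/-- `S_a = {u ∈ F^× : Tr_{F/E}(u^{2^s+1}) = 0 ∧ Tr_{F/E}(ω^a u) = 0}`. -/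
def Sa {F : Type*} [Field F] (s : ℕ) (ω : F) (a : ℤ) : Set F :=
  {u | u ≠ 0 ∧ trFE s (u ^ (2 ^ s + 1)) = 0 ∧ trFE s (ω ^ a * u) = 0}

/-- `T₁ ⊆ ℤ/Mℤ`: classes `a` with `|S_a| = 2^s - 1`. -/
def T1 {F : Type*} [Field F] (s : ℕ) (ω : F) : Set (ZMod (Mof s)) :=
  {x | (Sa s ω (x.val : ℤ)).ncard = 2 ^ s - 1}

/-- `T₂ ⊆ ℤ/Mℤ`: classes `a` with `|S_a| = 2(2^s - 1)`. -/
def T2 {F : Type*} [Field F] (s : ℕ) (ω : F) : Set (ZMod (Mof s)) :=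
  {x | (Sa s ω (x.val : ℤ)).ncard = 2 * (2 ^ s - 1)}

/-- `T₃ ⊆ ℤ/Mℤ`: classes `a` with `|S_a| = 0`. -/
def T3 {F : Type*} [Field F] (s : ℕ) (ω : F) : Set (ZMod (Mof s)) :=
  {x | (Sa s ω (x.val : ℤ)).ncard = 0}

/-- The cyclotomic class `C_i^{(M,K)} = {g^{i+Mt} : t ∈ ℤ}`. -/
def cyc {K : Type*} [Field K] (M : ℕ) (g : K) (i : ℤ) : Set K :=
  {x | ∃ t : ℤ, x = g ^ (i + (M : ℤ) * t)}

/-- `⋃_{i ∈ T} C_i^{(M,K)}` for a set `T ⊆ ℤ/Mℤ` of indices. -/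
def Rclass {K : Type*} [Field K] (s : ℕ) (g : K) (T : Set (ZMod (Mof s))) : Set K :=
  ⋃ i ∈ T, cyc (Mof s) g ((i.val : ℤ))

/-- The family `R_0 = {0}`, `R_k = ⋃_{i ∈ T_k} C_i^{(M,K)}`, `k = 1, 2, 3`. -/
def Rfam {F K : Type*} [Field F] [Field K] (s : ℕ) (ω : F) (g : K) : Fin 4 → Set K :=
  ![{0}, Rclass s g (T1 s ω), Rclass s g (T2 s ω), Rclass s g (T3 s ω)]

/-- Indicator `[P] = 1` if `P` holds, `0` otherwise. -/
def Ind (P : Prop) : ℤ := @ite ℤ P (Classical.propDecidable P) 1 0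

open scoped Classical in
/-- Fixed elements of `σ`. -/
def EE {F : Type*} [Field F] [Fintype F] (σ : F →+* F) : Finset F :=
  Finset.univ.filter (fun x => σ x = x)

def tt {F : Type*} [Field F] (σ : F →+* F) (x : F) : F := x + σ x + σ (σ x)

open scoped Classical in
def OO {F : Type*} [Field F] [Fintype F] (σ : F →+* F) : Finset F :=
  Finset.univ.filter (fun u => u ≠ 0 ∧ tt σ (u * σ u) = 0)

open scoped Classical in
def NN {F : Type*} [Field F] [Fintype F] (σ : F →+* F) (y : F) : ℕ :=
  ((OO σ).filter (fun u => tt σ (y * u) = 0)).card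

set_option linter.unusedSectionVars false
set_option linter.unusedSimpArgs false

section partF

variable {F : Type*} [Field F] [Fintype F] (σ : F →+* F)

lemma mem_EE {x : F} : x ∈ EE σ ↔ σ x = x := by simp [EE]

lemma mem_OO {u : F} : u ∈ OO σ ↔ u ≠ 0 ∧ tt σ (u * σ u) = 0 := by simp [OO]

lemma tt_add (x y : F) : tt σ (x + y) = tt σ x + tt σ y := by
  simp only [tt, map_add]; ring

lemma tt_zero : tt σ (0 : F) = 0 := by simp [tt]

lemma tt_smul {e : F} (he : σ e = e) (x : F) : tt σ (e * x) = e * tt σ x := by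
  simp only [tt, map_mul, he]; ring

lemma tt_fix (h3 : ∀ x, σ (σ (σ x)) = x) (x : F) : σ (tt σ x) = tt σ x := by
  simp only [tt, map_add, h3]; ring

lemma tt_of_fix [CharP F 2] {e : F} (he : σ e = e) : tt σ e = e := by
  have := CharTwo.add_self_eq_zero e
  simp only [tt, he]; linear_combination this

open scoped Classical in
lemma card_pattern (A : Finset F) (P : F → Prop) (z : F)
    (hA : ∀ u ∈ A, ∀ e, σ e = e → u + e * z ∈ A)
    (hex : ∀ u ∈ A, ∃ e, σ e = e ∧ P (u + e * z))
    (huniq : ∀ u ∈ A, P u → ∀ e, σ e = e → P (u + e * z) → e = 0) :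
    A.card = (EE σ).card * (A.filter P).card := by
  rw [← Finset.card_product]
  symm
  apply Finset.card_bij (fun p _ => p.2 + p.1 * z)
  · rintro ⟨e, u⟩ h
    simp only [Finset.mem_product, mem_EE, Finset.mem_filter] at h
    exact hA _ h.2.1 _ h.1
  · rintro ⟨e, u⟩ h ⟨e', u'⟩ h' heq
    simp only [Finset.mem_product, mem_EE, Finset.mem_filter] at h h' heq
    have hu : u' = u + (e - e') * z := by linear_combination - heq
    have h0 : e - e' = 0 := huniq u h.2.1 h.2.2 _ (by rw [map_sub, h.1, h'.1]) (hu ▸ h'.2.2)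
    rw [h0, zero_mul, add_zero] at hu
    rw [hu, sub_eq_zero.mp h0]
  · intro u hu
    obtain ⟨e, he, hP⟩ := hex u hu
    refine ⟨(-e, u + e * z), ?_, ?_⟩
    · simp only [Finset.mem_product, mem_EE, Finset.mem_filter]
      exact ⟨by rw [map_neg, he], hA _ hu _ he, hP⟩
    · simp

open scoped Classical in
lemma card_ker [CharP F 2] (h3 : ∀ x, σ (σ (σ x)) = x) (q : ℕ) (hq : 2 ≤ q)
    (hE : (EE σ).card = q) (hF : Fintype.card F = q ^ 3) : (Finset.univ.filter (fun u : F => tt σ u = 0)).card = q ^ 2 := by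
  have := card_pattern σ Finset.univ (fun u : F => tt σ u = 0) 1 (by simp)
    (fun u _ => ⟨tt σ u, tt_fix σ h3 u, by
      rw [mul_one, tt_add, tt_of_fix σ (tt_fix σ h3 u), CharTwo.add_self_eq_zero]⟩)
    (fun u _ hu e he h => by
      rw [mul_one, tt_add, hu, tt_of_fix σ he, zero_add] at h; exact h)
  rw [hE, Finset.card_univ, hF] at this
  have h0 : 0 < q := by omega
  exact Nat.eq_of_mul_eq_mul_left h0 (by rw [← this]; ring)

open scoped Classical in
lemma card_line [CharP F 2] (h3 : ∀ x, σ (σ (σ x)) = x) (q : ℕ) (hq : 2 ≤ q)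
    (hE : (EE σ).card = q) (hF : Fintype.card F = q ^ 3) {y : F} (hy : y ≠ 0) :
    (Finset.univ.filter (fun u : F => tt σ (y * u) = 0)).card = q ^ 2 := by
  rw [← card_ker σ h3 q hq hE hF]
  apply Finset.card_bij (fun u _ => y * u)
  · intro u; simp
  · intro u _ v _ h; exact mul_left_cancel₀ hy h
  · intro u hu
    refine ⟨y⁻¹ * u, ?_, ?_⟩
    · simpa [mul_inv_cancel_left₀ hy] using hu
    · exact mul_inv_cancel_left₀ hy u

open scoped Classical in
lemma card_two [CharP F 2] (h3 : ∀ x, σ (σ (σ x)) = x) (q : ℕ) (hq : 2 ≤ q)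
    (hE : (EE σ).card = q) (hF : Fintype.card F = q ^ 3) {w : F} (hw : σ w ≠ w) :
    (Finset.univ.filter (fun u : F => tt σ u = 0 ∧ tt σ (w * u) = 0)).card = q := by
  have h2 := CharTwo.two_eq_zero (R := F)
  set v := σ w + σ (σ w) with hv
  have hv0 : v ≠ 0 := by
    intro h
    have h' : σ (σ (σ w)) = σ (σ w) := by
      rw [← map_zero σ, ← map_zero σ] at h
      have : σ (w + σ w) = σ 0 := by rw [map_add, ← hv, h]; simp
      have := σ.injective this
      rw [CharTwo.add_eq_zero] at this
      exact absurd this.symm hw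
    rw [h3] at h'
    have h4 : σ w = σ (σ w) := CharTwo.add_eq_zero.mp h
    exact hw (h4.trans h'.symm)
  have hσv : σ v = σ (σ w) + w := by rw [hv, map_add, h3]
  rw [← hE]
  symm
  apply Finset.card_bij (fun e _ => e * v)
  · intro e he
    rw [mem_EE] at he
    simp only [Finset.mem_filter, Finset.mem_univ, true_and, tt, map_mul, he, hσv, map_add, h3, hv]
    constructor <;> ring_nf <;> simp [h2]
  · intro e _ e' _ h; exact mul_right_cancel₀ hv0 h
  · intro u hu
    simp only [Finset.mem_filter, Finset.mem_univ, true_and, tt, map_mul] at hu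
    obtain ⟨a, b⟩ := hu
    refine ⟨u / v, ?_, div_mul_cancel₀ u hv0⟩
    rw [mem_EE, map_div₀, div_eq_div_iff (by simpa using hv0) hv0, hσv, hv]
    linear_combination b + σ (σ w) * a - (σ (σ w) * u + w * u + σ (σ w) * σ (σ u)) * h2

/-- conic identity -/
lemma conic_inv [CharP F 2] (h3 : ∀ x, σ (σ (σ x)) = x) (q : ℕ) (hq : 2 ≤ q)
    (hE : (EE σ).card = q) (hF : Fintype.card F = q ^ 3) {u : F} (hu : u ≠ 0) :
    tt σ (u * σ u) = (u * σ u * σ (σ u)) * tt σ (u⁻¹) := by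
  have h1 : σ u ≠ 0 := by simpa using hu
  have h2 : σ (σ u) ≠ 0 := by simpa using hu
  simp only [tt, map_mul, map_inv₀, h3]
  field_simp
  ring

open scoped Classical in
lemma count_inv [CharP F 2] (h3 : ∀ x, σ (σ (σ x)) = x) (q : ℕ) (hq : 2 ≤ q)
    (hE : (EE σ).card = q) (hF : Fintype.card F = q ^ 3) (w : F) :
    ((OO σ).filter (fun u => tt σ (w * u⁻¹) = 0)).card
      = ((Finset.univ.filter (fun u : F => tt σ u = 0 ∧ tt σ (w * u) = 0)).erase 0).card := by
  apply Finset.card_bij (fun u _ => u⁻¹)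
  · intro u hu
    simp only [Finset.mem_filter, mem_OO] at hu
    obtain ⟨⟨h0, h1⟩, h2⟩ := hu
    rw [conic_inv σ h3 q hq hE hF h0] at h1
    have : u * σ u * σ (σ u) ≠ 0 := by simp [h0]
    simp [h0, h2, (mul_eq_zero.mp h1).resolve_left this]
  · intro u _ v _ h; exact inv_injective h
  · intro u hu
    simp only [Finset.mem_erase, Finset.mem_filter, Finset.mem_univ, true_and] at hu
    refine ⟨u⁻¹, ?_, inv_inv u⟩
    simp only [Finset.mem_filter, mem_OO, inv_inv]
    refine ⟨⟨inv_ne_zero hu.1, ?_⟩, hu.2.2⟩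
    rw [conic_inv σ h3 q hq hE hF (inv_ne_zero hu.1), inv_inv, hu.2.1, mul_zero]

open scoped Classical in
lemma card_erase_zero [CharP F 2] (h3 : ∀ x, σ (σ (σ x)) = x) (q : ℕ) (hq : 2 ≤ q)
    (hE : (EE σ).card = q) (hF : Fintype.card F = q ^ 3) (A : Finset F) (h : 0 ∈ A) : ((A.erase 0).card : ℤ) = A.card - 1 := by
  rw [← Finset.card_erase_add_one h]; simp

open scoped Classical in
lemma count_fix [CharP F 2] (h3 : ∀ x, σ (σ (σ x)) = x) (q : ℕ) (hq : 2 ≤ q)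
    (hE : (EE σ).card = q) (hF : Fintype.card F = q ^ 3) {w : F} (hw : σ w = w) :
    (((OO σ).filter (fun u => tt σ (w * u⁻¹) = 0)).card : ℤ) = q ^ 2 - 1 := by
  rw [count_inv σ h3 q hq hE hF, card_erase_zero σ h3 q hq hE hF _ (by simp [tt_zero])]
  have := card_ker σ h3 q hq hE hF
  have h : (Finset.univ.filter (fun u : F => tt σ u = 0 ∧ tt σ (w * u) = 0))
      = Finset.univ.filter (fun u : F => tt σ u = 0) := by
    ext u; simp only [Finset.mem_filter, Finset.mem_univ, true_and, tt_smul σ hw]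
    constructor
    · exact fun h => h.1
    · intro h; simp [h]
  rw [h, this]; push_cast; ring

open scoped Classical in
lemma count_nfix [CharP F 2] (h3 : ∀ x, σ (σ (σ x)) = x) (q : ℕ) (hq : 2 ≤ q)
    (hE : (EE σ).card = q) (hF : Fintype.card F = q ^ 3) {w : F} (hw : σ w ≠ w) :
    (((OO σ).filter (fun u => tt σ (w * u⁻¹) = 0)).card : ℤ) = q - 1 := by
  rw [count_inv σ h3 q hq hE hF, card_erase_zero σ h3 q hq hE hF _ (by simp [tt_zero]),
    card_two σ h3 q hq hE hF hw]

lemma card_OO [CharP F 2] (h3 : ∀ x, σ (σ (σ x)) = x) (q : ℕ) (hq : 2 ≤ q)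
    (hE : (EE σ).card = q) (hF : Fintype.card F = q ^ 3) : ((OO σ).card : ℤ) = q ^ 2 - 1 := by
  classical
  have := count_fix σ h3 q hq hE hF (w := 0) (by simp)
  simpa [tt_zero] using this

lemma sqrt_fix [CharP F 2] (h3 : ∀ x, σ (σ (σ x)) = x) (q : ℕ) (hq : 2 ≤ q)
    (hE : (EE σ).card = q) (hF : Fintype.card F = q ^ 3) {e : F} (he : σ e = e) : ∃ r, σ r = r ∧ r ^ 2 = e := by
  have hinj : Function.Injective (frobenius F 2) := (frobenius F 2).injective
  obtain ⟨r, hr⟩ := (Finite.injective_iff_surjective.mp hinj) e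
  refine ⟨r, hinj ?_, by simpa [frobenius_def] using hr⟩
  rw [hr]
  have : σ (frobenius F 2 r) = frobenius F 2 (σ r) := by simp [frobenius_def]
  rw [← this, hr, he]

/-- polarization -/
lemma Q_add [CharP F 2] (h3 : ∀ x, σ (σ (σ x)) = x) (q : ℕ) (hq : 2 ≤ q)
    (hE : (EE σ).card = q) (hF : Fintype.card F = q ^ 3) (u z : F) : tt σ ((u + z) * σ (u + z)) =
    tt σ (u * σ u) + tt σ (z * σ z) + tt σ ((z + tt σ z) * u) := by
  have h2 := CharTwo.two_eq_zero (R := F)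
  simp only [tt, map_mul, map_add, h3]
  linear_combination (-(z * u) - σ z * σ u - σ (σ z) * σ (σ u)) * h2

lemma Q_smul [CharP F 2] (h3 : ∀ x, σ (σ (σ x)) = x) (q : ℕ) (hq : 2 ≤ q)
    (hE : (EE σ).card = q) (hF : Fintype.card F = q ^ 3) {e : F} (he : σ e = e) (z : F) :
    tt σ ((e * z) * σ (e * z)) = e ^ 2 * tt σ (z * σ z) := by
  rw [← tt_smul σ (by rw [map_pow, he]) , map_mul, he]; congr 1; ring

open scoped Classical in
lemma NN_eq [CharP F 2] (h3 : ∀ x, σ (σ (σ x)) = x) (q : ℕ) (hq : 2 ≤ q)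
    (hE : (EE σ).card = q) (hF : Fintype.card F = q ^ 3) (y : F) : (NN σ y : ℤ) =
    ((Finset.univ.filter (fun u : F => tt σ (y * u) = 0)).filter
      (fun u => tt σ (u * σ u) = 0)).card - 1 := by
  rw [← card_erase_zero σ h3 q hq hE hF _ (by simp [tt_zero]), NN]
  congr 2
  ext u; simp [mem_OO, tt_zero]; tauto

/-- tangent lines -/
lemma NN_tangent [CharP F 2] (h3 : ∀ x, σ (σ (σ x)) = x) (q : ℕ) (hq : 2 ≤ q)
    (hE : (EE σ).card = q) (hF : Fintype.card F = q ^ 3) {y : F} (hy : y ≠ 0) (h : tt σ y = 0) : (NN σ y : ℤ) = q - 1 := by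
  classical
  have h2 := CharTwo.two_eq_zero (R := F)
  rw [NN_eq σ h3 q hq hE hF]
  have hQ : ∀ u e, σ e = e → tt σ ((u + e * 1) * σ (u + e * 1)) = tt σ (u * σ u) + e ^ 2 := by
    intro u e he
    rw [Q_add σ h3 q hq hE hF, mul_one, tt_of_fix σ he, CharTwo.add_self_eq_zero, zero_mul,
      tt_zero, add_zero, he, ← pow_two, tt_of_fix σ (e := e ^ 2) (by rw [map_pow, he])]
  have := card_pattern σ (Finset.univ.filter (fun u : F => tt σ (y * u) = 0))
    (fun u => tt σ (u * σ u) = 0) 1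
    (by
      intro u hu e he
      simp only [Finset.mem_filter, Finset.mem_univ, true_and] at hu ⊢
      rw [mul_one, mul_add, tt_add, hu, mul_comm y e, tt_smul σ he, h]; simp)
    (by
      intro u _
      obtain ⟨r, hr, hr2⟩ := sqrt_fix σ h3 q hq hE hF (tt_fix σ h3 (u * σ u))
      exact ⟨r, hr, by rw [hQ u r hr, hr2, CharTwo.add_self_eq_zero]⟩)
    (by
      intro u _ hu e he hh
      rw [hQ u e he, hu, zero_add] at hh
      exact pow_eq_zero_iff (two_ne_zero) |>.mp hh)
  rw [card_line σ h3 q hq hE hF hy, hE] at this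
  have h0 : 0 < q := by omega
  have := Nat.eq_of_mul_eq_mul_left h0 ((pow_two q).symm.trans this)
  rw [← this]

/-- other lines -/
lemma NN_other [CharP F 2] (h3 : ∀ x, σ (σ (σ x)) = x) (q : ℕ) (hq : 2 ≤ q)
    (hE : (EE σ).card = q) (hF : Fintype.card F = q ^ 3) {y : F} (h : tt σ y ≠ 0) : (NN σ y : ℤ) = 0 ∨ (NN σ y : ℤ) = 2 * (q - 1) := by
  classical
  have h2 := CharTwo.two_eq_zero (R := F)
  have hy : y ≠ 0 := by rintro rfl; exact h (tt_zero σ)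
  by_cases hne : ∃ z, z ≠ 0 ∧ tt σ (z * σ z) = 0 ∧ tt σ (y * z) = 0
  swap
  · left
    push Not at hne
    have : (OO σ).filter (fun u => tt σ (y * u) = 0) = ∅ := by
      ext u; simp only [Finset.mem_filter, mem_OO, Finset.notMem_empty, iff_false]
      rintro ⟨⟨a, b⟩, c⟩; exact hne u a b c
    simp [NN, this]
  right
  obtain ⟨z, hz, hQz, hyz⟩ := hne
  set L := Finset.univ.filter (fun u : F => tt σ (y * u) = 0) with hL
  have memL : ∀ u, u ∈ L ↔ tt σ (y * u) = 0 := by simp [hL]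
  set z' := z + tt σ z with hz'
  have hz'0 : z' ≠ 0 := by
    intro h0
    have hzf : z = tt σ z := CharTwo.add_eq_zero.mp h0
    have hzf' : σ z = z := by rw [hzf, tt_fix σ h3]
    rw [mul_comm, tt_smul σ hzf'] at hyz
    exact (mul_ne_zero hz h) hyz
  have htz' : tt σ z' = 0 := by
    rw [hz', tt_add, tt_of_fix σ (tt_fix σ h3 z), CharTwo.add_self_eq_zero]
  have hw : σ (z' / y) ≠ z' / y := by
    intro hf
    have : tt σ z' = (z' / y) * tt σ y := by
      rw [← tt_smul σ hf, div_mul_cancel₀ _ hy]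
    rw [htz'] at this
    exact (mul_ne_zero (div_ne_zero hz'0 hy) h) this.symm
  have hzz : tt σ (z' * z) = 0 := by
    rw [hz', add_mul, tt_add, tt_smul σ (tt_fix σ h3 z)]
    simp only [tt, map_mul] at hQz ⊢
    simp only [h3] at hQz
    linear_combination 2 * hQz + (z ^ 2 + (σ z) ^ 2 + (σ (σ z)) ^ 2) * h2
  set A := L.filter (fun u => tt σ (z' * u) = 0) with hAdef
  have memA : ∀ u, u ∈ A ↔ tt σ (y * u) = 0 ∧ tt σ (z' * u) = 0 := by
    intro u; simp [hAdef, memL]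
  have hAc : A.card = q := by
    rw [← card_two σ h3 q hq hE hF hw]
    apply Finset.card_bij (fun u _ => y * u)
    · intro u hu
      rw [memA] at hu
      simp only [Finset.mem_filter, Finset.mem_univ, true_and]
      rw [← mul_assoc, div_mul_cancel₀ _ hy]; exact hu
    · intro u _ v _ h; exact mul_left_cancel₀ hy h
    · intro u hu
      simp only [Finset.mem_filter, Finset.mem_univ, true_and] at hu
      refine ⟨y⁻¹ * u, ?_, mul_inv_cancel_left₀ hy u⟩
      rw [memA, mul_inv_cancel_left₀ hy, ← mul_assoc, ← div_eq_mul_inv]; exact hu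
  have hAimg : (EE σ).image (fun e => e * z) = A := by
    apply Finset.eq_of_subset_of_card_le
    · intro u hu
      rw [Finset.mem_image] at hu
      obtain ⟨e, he, rfl⟩ := hu
      rw [mem_EE] at he
      rw [memA, mul_left_comm, tt_smul σ he, hyz, mul_left_comm, tt_smul σ he, hzz]; simp
    · rw [Finset.card_image_of_injective _ (mul_left_injective₀ hz), hE, hAc]
  have hAQ : ∀ u ∈ A, tt σ (u * σ u) = 0 := by
    intro u hu
    rw [← hAimg, Finset.mem_image] at hu
    obtain ⟨e, he, rfl⟩ := hu
    rw [Q_smul σ h3 q hq hE hF ((mem_EE σ).mp he), hQz, mul_zero]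
  set B := L.filter (fun u => ¬ tt σ (z' * u) = 0) with hB
  have memB : ∀ u, u ∈ B ↔ tt σ (y * u) = 0 ∧ ¬ tt σ (z' * u) = 0 := by
    intro u; simp [hB, memL]
  have hAB : A.card + B.card = L.card := Finset.card_filter_add_card_filter_not _
  have hQ : ∀ u e, σ e = e → tt σ ((u + e * z) * σ (u + e * z)) =
      tt σ (u * σ u) + e * tt σ (z' * u) := by
    intro u e he
    rw [Q_add σ h3 q hq hE hF, Q_smul σ h3 q hq hE hF he, hQz, tt_smul σ he, ← mul_add,
      mul_assoc e, tt_smul σ he]; simp [hz']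
  have key := card_pattern σ B (fun u => tt σ (u * σ u) = 0) z
    (by
      intro u hu e he
      rw [memB] at hu ⊢
      rw [mul_add, tt_add, mul_left_comm, tt_smul σ he, hyz, mul_add, tt_add, mul_left_comm,
        tt_smul σ he, hzz]; simpa using hu)
    (by
      intro u hu
      rw [memB] at hu
      have hf : σ (tt σ (u * σ u) / tt σ (z' * u)) = tt σ (u * σ u) / tt σ (z' * u) := by
        rw [map_div₀, tt_fix σ h3, tt_fix σ h3]
      refine ⟨_, hf, ?_⟩
      rw [hQ _ _ hf, div_mul_cancel₀ _ hu.2, CharTwo.add_self_eq_zero])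
    (by
      intro u hu hQu e he hh
      rw [memB] at hu
      rw [hQ u e he, hQu, zero_add] at hh
      exact (mul_eq_zero.mp hh).resolve_right hu.2)
  rw [hE] at key
  rw [card_line σ h3 q hq hE hF hy, hAc, key] at hAB
  rw [NN_eq σ h3 q hq hE hF, ← hL]
  have hsplit : (L.filter (fun u => tt σ (u * σ u) = 0)).card
      = A.card + (B.filter (fun u => tt σ (u * σ u) = 0)).card := by
    rw [← Finset.card_filter_add_card_filter_not (s := L.filter (fun u => tt σ (u * σ u) = 0))
      (fun u => tt σ (z' * u) = 0)]
    congr 2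
    · ext u
      simp only [Finset.mem_filter, hAdef]
      constructor
      · tauto
      · intro hu; exact ⟨⟨hu.1, hAQ u (by simpa [hAdef] using hu)⟩, hu.2⟩
    · ext u
      simp only [hB, Finset.mem_filter]
      tauto
  rw [hsplit, hAc]
  have h0 : (q : ℤ) ≠ 0 := by positivity
  have : (q : ℤ) + q * ((B.filter (fun u => tt σ (u * σ u) = 0)).card : ℤ) = q ^ 2 := by
    exact_mod_cast hAB
  have h5 := mul_left_cancel₀ h0 ((by linear_combination this :
    (q : ℤ) * ((B.filter (fun u => tt σ (u * σ u) = 0)).card : ℤ) = q * (q - 1)))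
  push_cast
  rw [h5]; ring

lemma NN_smul [CharP F 2] (h3 : ∀ x, σ (σ (σ x)) = x) (q : ℕ) (hq : 2 ≤ q)
    (hE : (EE σ).card = q) (hF : Fintype.card F = q ^ 3) {e : F} (he : σ e = e) (he0 : e ≠ 0) (y : F) : NN σ (y * e) = NN σ y := by
  classical
  unfold NN
  congr 1
  ext u
  rw [Finset.mem_filter, Finset.mem_filter, mul_comm y e, mul_assoc, tt_smul σ he]
  simp [he0]

end partF

section charsums

variable {F : Type*} [Field F] [Fintype F]

lemma addchar_sum_zero {A : Type*} [AddCommGroup A] [Fintype A] (χ : A → ℤ)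
    (hadd : ∀ x y, χ (x + y) = χ x * χ y) (h : ∃ x, χ x ≠ 1) : ∑ x, χ x = 0 := by
  obtain ⟨a, ha⟩ := h
  have h1 : ∑ x, χ x = χ a * ∑ x, χ x := by
    rw [Finset.mul_sum, ← Equiv.sum_comp (Equiv.addLeft a)]
    simp [hadd]
  have : (χ a - 1) * ∑ x, χ x = 0 := by linear_combination -h1
  exact (mul_eq_zero.mp this).resolve_left (sub_ne_zero.mpr ha)

open scoped Classical in
lemma sum_EE [CharP F 2] (σ : F →+* F) (h3 : ∀ x, σ (σ (σ x)) = x) (χ : F → ℤ)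
    (hadd : ∀ x y, χ (x + y) = χ x * χ y) (h0 : χ 0 = 1) (hσ : ∀ x, χ (σ x) = χ x)
    (hsq : ∀ x, χ x * χ x = 1)
    (hne : ∃ x, χ x ≠ 1) (t : F) :
    ∑ e ∈ EE σ, χ (e * t) = if tt σ t = 0 then ((EE σ).card : ℤ) else 0 := by
  have htt : ∀ x, χ (tt σ x) = χ x := by
    intro x
    rw [tt, hadd, hadd, hσ, hσ, hσ, hsq, one_mul]
  split_ifs with ht
  · rw [Finset.card_eq_sum_ones]
    push_cast
    apply Finset.sum_congr rfl
    intro e he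
    rw [← htt, tt_smul σ ((mem_EE σ).mp he), ht, mul_zero, h0]
  · have : ∃ a ∈ EE σ, χ (a * t) ≠ 1 := by
      by_contra! hcon
      obtain ⟨x, hx⟩ := hne
      apply hx
      have h1 : σ (tt σ x / tt σ t) = tt σ x / tt σ t := by
        rw [map_div₀, tt_fix σ h3, tt_fix σ h3]
      have := hcon _ ((mem_EE σ).mpr h1)
      rw [← htt, tt_smul σ h1, div_mul_cancel₀ _ ht, htt] at this
      exact this
    obtain ⟨a, ha, ha1⟩ := this
    rw [mem_EE] at ha
    have h1 : ∑ e ∈ EE σ, χ (e * t) = χ (a * t) * ∑ e ∈ EE σ, χ (e * t) := by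
      rw [Finset.mul_sum]
      apply Finset.sum_bij' (fun e _ => e - a) (fun e _ => e + a)
      · intro e he; rw [mem_EE] at *; rw [map_sub, he, ha]
      · intro e he; rw [mem_EE] at *; rw [map_add, he, ha]
      · intro e _; ring
      · intro e _; ring
      · intro e _; rw [← hadd]; congr 1; ring
    have : (χ (a * t) - 1) * ∑ e ∈ EE σ, χ (e * t) = 0 := by linear_combination -h1
    exact (mul_eq_zero.mp this).resolve_left (sub_ne_zero.mpr ha1)

open scoped Classical in
/-- Quadratic Gauss-type sum over `G`. -/
lemma gauss_sum {G : Type*} [Field G] [Fintype G] (χ : F → ℤ)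
    (hadd : ∀ x y, χ (x + y) = χ x * χ y) (h0 : χ 0 = 1)
    (hsq : ∀ x, χ x * χ x = 1) (hne : ∃ x, χ x ≠ 1)
    (N T : G → F) (f : F →+* G) (br : G → G)
    (hbr : ∀ c l, br (br c * f l) = c * f l)
    (hNmul : ∀ x y, N (x * y) = N x * N y) (hN0 : ∀ x, N x = 0 ↔ x = 0)
    (hNf : ∀ l, N (f l) = l ^ 2) (hNbr : ∀ x, N (br x) = N x)
    (hNsurj : Function.Surjective N)
    (hNadd : ∀ x d, N (x + d) = N x + N d + T (x * br d))
    (hTf : ∀ l x, T (f l * x) = l * T x)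
    (hTadd : ∀ x y, T (x + y) = T x + T y)
    (hTne : ∃ x, χ (T x) ≠ 1)
    (Q : ℤ) (hQ : 1 < Q) (hF : (Fintype.card F : ℤ) = Q) (hG : (Fintype.card G : ℤ) = Q ^ 2)
    (c : G) (hc : c ≠ 0) (l : F) :
    ∑ x, χ (l * N x) * χ (T (c * x)) =
      - Q * χ (l⁻¹ * N c) + if l = 0 then Q else 0 := by
  classical
  have hlin : ∀ c : G, c ≠ 0 → ∑ x, χ (T (c * x)) = 0 := by
    intro c hc
    obtain ⟨x, hx⟩ := hTne
    exact addchar_sum_zero (fun x => χ (T (c * x))) (fun x y => by rw [mul_add, hTadd, hadd])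
      ⟨c⁻¹ * x, by simpa [mul_inv_cancel_left₀ hc] using hx⟩
  split_ifs with hl
  · subst hl
    simp [h0, hlin c hc]
  -- W
  have hW : ∀ l : F, l ≠ 0 → ∑ x, χ (l * N x) = -Q := by
    have hW1 : ∀ l : F, l ≠ 0 → ∑ x, χ (l * N x) = ∑ x, χ (N x) := by
      intro l hl
      obtain ⟨d, hd⟩ := hNsurj l
      have hd0 : d ≠ 0 := by
        intro h; rw [(hN0 d).mpr h] at hd; exact hl hd.symm
      rw [← Equiv.sum_comp (Equiv.mulLeft₀ d hd0) (fun x => χ (N x))]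
      simp [hNmul, hd]
    have htot : ∑ l : F, ∑ x, χ (l * N x) = Q := by
      rw [Finset.sum_comm]
      rw [Finset.sum_eq_single (0 : G)]
      · rw [(hN0 0).mpr rfl]; simp [h0, hF]
      · intro x _ hx
        have hx' : N x ≠ 0 := fun h => hx ((hN0 x).mp h)
        obtain ⟨y, hy⟩ := hne
        exact addchar_sum_zero (fun l => χ (l * N x)) (fun x y => by rw [add_mul, hadd])
          ⟨y * (N x)⁻¹, by simpa [inv_mul_cancel_right₀ hx'] using hy⟩
      · simp
    rw [← Finset.add_sum_erase _ _ (Finset.mem_univ (0 : F)),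
      Finset.sum_congr rfl (fun l hl => hW1 l (Finset.ne_of_mem_erase hl))] at htot
    simp only [zero_mul, h0, Finset.sum_const, Finset.card_univ, nsmul_eq_mul, mul_one,
      Finset.card_erase_of_mem (Finset.mem_univ (0 : F))] at htot
    have hpos : 1 ≤ Fintype.card F := Fintype.card_pos
    rw [Nat.cast_sub hpos, hF, hG] at htot
    intro l hl
    rw [hW1 l hl]
    have : (Q - 1) * ((∑ x, χ (N x)) + Q) = 0 := by push_cast at htot; linear_combination htot
    have := (mul_eq_zero.mp this).resolve_left (by omega)
    omega
  -- complete the square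
  set d := br c * f l⁻¹ with hd
  have hNd : N d = l⁻¹ ^ 2 * N c := by rw [hd, hNmul, hNbr, hNf, mul_comm]
  have key : ∀ x, χ (l * N x) * χ (T (c * x)) = χ (l * N (x + d)) * χ (l⁻¹ * N c) := by
    intro x
    have e1 : l * N (x + d) = l * N x + l⁻¹ * N c + T (c * x) := by
      rw [hNadd, hNd]
      have : T (x * br d) = l⁻¹ * T (c * x) := by
        rw [hd, hbr, ← hTf]; congr 1; ring
      rw [this]; field_simp
    rw [e1, hadd, hadd]
    linear_combination (- χ (l * N x) * χ (T (c * x))) * hsq (l⁻¹ * N c)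
  have hshift : ∑ x, χ (l * N (x + d)) = ∑ x, χ (l * N x) :=
    Equiv.sum_comp (Equiv.addRight d) (fun x => χ (l * N x))
  rw [Finset.sum_congr rfl (fun x _ => key x), ← Finset.sum_mul, hshift, hW l hl, add_zero]

open scoped Classical in
/-- the final count, abstractly -/
lemma final_sums {G : Type*} [Field G] [Fintype G] [CharP F 2]
    (σ : F →+* F) (h3 : ∀ x, σ (σ (σ x)) = x) (q : ℕ) (hq : 2 ≤ q)
    (hE : (EE σ).card = q) (hF : Fintype.card F = q ^ 3)
    (χ : F → ℤ)
    (hadd : ∀ x y, χ (x + y) = χ x * χ y) (h0 : χ 0 = 1) (hσ : ∀ x, χ (σ x) = χ x)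
    (hsq : ∀ x, χ x * χ x = 1) (hne : ∃ x, χ x ≠ 1)
    (N : G → F) (ψ : G → ℤ) (hψ0 : ψ 0 = 1) (hN0 : ∀ x, N x = 0 ↔ x = 0)
    (c : G) (hsum : ∑ x, ψ (c * x) = 0)
    (hgauss : ∀ l, ∑ x, χ (l * N x) * ψ (c * x) =
      - (q : ℤ) ^ 3 * χ (l⁻¹ * N c) + if l = 0 then (q : ℤ) ^ 3 else 0)
    (S : ℕ → ℤ) (hS : ∀ k, S k = ∑ x, if x ≠ 0 ∧ NN σ (N x) = k * (q - 1) then ψ (c * x) else 0) :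
    (S 1 = q ^ 2 - 1 - if tt σ (N c) = 0 then (q : ℤ) ^ 3 else 0) ∧
    S 0 + S 1 + S 2 = -1 ∧
    S 1 + 2 * S 2 = if σ (N c) = N c then (q + 1) * (q ^ 2 - 1 - q ^ 3 : ℤ)
      else q ^ 2 - q - 1 := by
  have hq0 : (q : ℤ) ≠ 0 := by positivity
  have inner : ∀ u : F, u ≠ 0 → (∑ x, if tt σ (N x * u) = 0 then ψ (c * x) else 0) =
      q ^ 2 - if tt σ (N c * u⁻¹) = 0 then (q : ℤ) ^ 3 else 0 := by
    intro u hu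
    apply mul_left_cancel₀ hq0
    have e1 : ∀ x, (q : ℤ) * (if tt σ (N x * u) = 0 then ψ (c * x) else 0) =
        ∑ e ∈ EE σ, χ ((e * u) * N x) * ψ (c * x) := by
      intro x
      have := sum_EE σ h3 χ hadd h0 hσ hsq hne (N x * u)
      rw [← Finset.sum_mul]
      have h4 : ∑ e ∈ EE σ, χ (e * u * N x) = ∑ e ∈ EE σ, χ (e * (N x * u)) :=
        Finset.sum_congr rfl (fun e _ => by congr 1; ring)
      rw [h4, this, hE]
      split_ifs <;> simp
    rw [Finset.mul_sum, Finset.sum_congr rfl (fun x _ => e1 x), Finset.sum_comm,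
      Finset.sum_congr rfl (fun e _ => hgauss (e * u)), Finset.sum_add_distrib, ← Finset.mul_sum]
    have e2 : ∑ e ∈ EE σ, χ ((e * u)⁻¹ * N c) = ∑ e ∈ EE σ, χ (e * (N c * u⁻¹)) := by
      refine Finset.sum_bij' (fun e _ => e⁻¹) (fun e _ => e⁻¹) ?_ ?_ ?_ ?_ ?_
      · intro e he; rw [mem_EE] at *; rw [map_inv₀, he]
      · intro e he; rw [mem_EE] at *; rw [map_inv₀, he]
      · intro e _; exact inv_inv e
      · intro e _; exact inv_inv e
      · intro e _; congr 1; rw [mul_inv]; ring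
    have e3 : ∑ e ∈ EE σ, (if e * u = 0 then (q : ℤ) ^ 3 else 0) = q ^ 3 := by
      rw [Finset.sum_eq_single (0 : F)]
      · simp
      · intro e _ he; simp [he, hu]
      · intro h; exact absurd ((mem_EE σ).mpr (map_zero σ)) h
    rw [e2, e3, sum_EE σ h3 χ hadd h0 hσ hsq hne, hE]
    split_ifs <;> ring
  have N0 : N 0 = 0 := (hN0 0).mpr rfl
  have tri : ∀ y : F, y ≠ 0 → (NN σ y = 1 * (q - 1) ∧ tt σ y = 0) ∨
      ((NN σ y = 0 ∨ NN σ y = 2 * (q - 1)) ∧ tt σ y ≠ 0) := by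
    intro y hy
    by_cases h : tt σ y = 0
    · left
      have := NN_tangent σ h3 q hq hE hF hy h
      exact ⟨by omega, h⟩
    · right
      have := NN_other σ h3 q hq hE hF h
      exact ⟨by omega, h⟩
  have split0 : ∀ g : G → ℤ, ∑ x, (if x ≠ 0 then g x else 0) = (∑ x, g x) - g 0 := by
    intro g
    have : ∀ x, (if x ≠ 0 then g x else 0) = g x - if x = 0 then g 0 else 0 := by
      intro x; by_cases hx : x = 0 <;> simp [hx]
    rw [Finset.sum_congr rfl (fun x _ => this x), Finset.sum_sub_distrib]; simp
  refine ⟨?_, ?_, ?_⟩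
  · have := inner 1 one_ne_zero
    simp only [mul_one, inv_one] at this
    have h5 := split0 (fun x => if tt σ (N x) = 0 then ψ (c * x) else 0)
    rw [this] at h5
    simp only [N0, tt_zero, mul_zero, hψ0, if_true] at h5
    rw [hS]
    have : ∀ x, (if x ≠ 0 ∧ NN σ (N x) = 1 * (q - 1) then ψ (c * x) else 0) =
        if x ≠ 0 then (if tt σ (N x) = 0 then ψ (c * x) else 0) else 0 := by
      intro x
      by_cases hx : x = 0
      · simp [hx]
      · rcases tri (N x) (fun h => hx ((hN0 x).mp h)) with h | h
        · simp [hx, h.1, h.2]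
        · have : NN σ (N x) ≠ 1 * (q - 1) := by omega
          simp only [this, h.2, and_false, if_false, ite_self]
    rw [Finset.sum_congr rfl (fun x _ => this x), h5]
    ring
  · rw [hS, hS, hS, ← Finset.sum_add_distrib, ← Finset.sum_add_distrib]
    have h5 := split0 (fun x => ψ (c * x))
    rw [hsum, mul_zero, hψ0] at h5
    rw [← zero_sub, ← h5]
    apply Finset.sum_congr rfl
    intro x _
    by_cases hx : x = 0
    · simp [hx]
    · have h6 : q - 1 ≠ 0 := by omega
      have h7 : q - 1 ≠ 2 * (q - 1) := by omega
      rcases tri (N x) (fun h => hx ((hN0 x).mp h)) with h | ⟨h | h, _⟩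
      · simp [hx, h.1, h6]
      · simp [hx, h, h6, Ne.symm h6]
      · simp [hx, h, h6, h7.symm]
  · have hq1 : ((q : ℤ) - 1) ≠ 0 := by omega
    apply mul_left_cancel₀ hq1
    have e1 : ((q : ℤ) - 1) * (S 1 + 2 * S 2) =
        ∑ x, if x ≠ 0 then (NN σ (N x) : ℤ) * ψ (c * x) else 0 := by
      rw [hS, hS, Finset.mul_sum, ← Finset.sum_add_distrib, Finset.mul_sum]
      apply Finset.sum_congr rfl
      intro x _
      have hc1 : ((q - 1 : ℕ) : ℤ) = q - 1 := by omega
      by_cases hx : x = 0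
      · simp [hx]
      · have h6 : q - 1 ≠ 0 := by omega
        have h7 : q - 1 ≠ 2 * (q - 1) := by omega
        rcases tri (N x) (fun h => hx ((hN0 x).mp h)) with h | ⟨h | h, _⟩
        · simp [hx, h.1, h6, hc1]
        · simp [hx, h, h6, Ne.symm h6]
        · simp [hx, h, h6, h7.symm, hc1]; ring
    have e2 : ∀ y : F, (NN σ y : ℤ) = ∑ u ∈ OO σ, if tt σ (y * u) = 0 then 1 else 0 := by
      intro y; rw [NN, Finset.card_filter]; push_cast; rfl
    have e3 : ∑ x, (NN σ (N x) : ℤ) * ψ (c * x) =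
        ∑ u ∈ OO σ, ((q : ℤ) ^ 2 - if tt σ (N c * u⁻¹) = 0 then (q : ℤ) ^ 3 else 0) := by
      rw [← Finset.sum_congr rfl (fun u hu => inner u ((mem_OO σ).mp hu).1), Finset.sum_comm]
      apply Finset.sum_congr rfl
      intro x _
      rw [e2, Finset.sum_mul]
      apply Finset.sum_congr rfl
      intro u _; split_ifs <;> simp
    have e4 : ∑ u ∈ OO σ, (if tt σ (N c * u⁻¹) = 0 then (q : ℤ) ^ 3 else 0) =
        (((OO σ).filter (fun u => tt σ (N c * u⁻¹) = 0)).card : ℤ) * q ^ 3 := by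
      rw [← Finset.sum_filter]; simp
    have e5 : (NN σ (N 0) : ℤ) = q ^ 2 - 1 := by
      rw [← card_OO σ h3 q hq hE hF, N0, NN]; simp [tt_zero]
    rw [e1, split0, e3, Finset.sum_sub_distrib, e4, e5, Finset.sum_const, nsmul_eq_mul,
      card_OO σ h3 q hq hE hF, mul_zero, hψ0]
    split_ifs with hfix
    · rw [count_fix σ h3 q hq hE hF hfix]; ring
    · rw [count_nfix σ h3 q hq hE hF hfix]; ring

end charsums

section concrete

lemma psi_add (F : Type*) [Field F] [Algebra (ZMod 2) F] (x y : F) :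
    psi F (x + y) = psi F x * psi F y := by
  have : ∀ x y : ZMod 2, (if x + y = 0 then (1 : ℤ) else -1) =
    (if x = 0 then 1 else -1) * (if y = 0 then 1 else -1) := by decide
  unfold psi
  rw [map_add]
  exact this _ _

lemma psi_zero (F : Type*) [Field F] [Algebra (ZMod 2) F] : psi F 0 = 1 := by
  simp [psi]

lemma psi_sq (F : Type*) [Field F] [Algebra (ZMod 2) F] (x : F) : psi F x * psi F x = 1 := by
  unfold psi; split_ifs <;> simp

lemma psi_ne (F : Type*) [Field F] [Fintype F] [Algebra (ZMod 2) F] : ∃ x, psi F x ≠ 1 := by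
  obtain ⟨x, hx⟩ := Algebra.trace_surjective (ZMod 2) F 1
  exact ⟨x, by simp [psi, hx]⟩

lemma psi_frob (F : Type*) [Field F] [Fintype F] [Algebra (ZMod 2) F] (s : ℕ) (x : F) :
    psi F (x ^ 2 ^ s) = psi F x := by
  have h2 : ∀ x : F, psi F (x ^ 2) = psi F x := by
    intro x
    have := Algebra.trace_eq_of_algEquiv
      (FiniteField.frobeniusAlgEquivOfAlgebraic (ZMod 2) F) x
    simp at this
    unfold psi
    rw [this]
  induction s with
  | zero => simp
  | succ n ih => rw [pow_succ, pow_mul, h2, ih]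

lemma card_EE (F : Type*) [Field F] [Fintype F] [CharP F 2] (s : ℕ) (hs : 1 ≤ s)
    (hF : Fintype.card F = 2 ^ (3 * s)) : (EE (iterateFrobenius F 2 s)).card = 2 ^ s := by
  classical
  have h1 : 1 ≤ 2 ^ s := Nat.one_le_two_pow
  have hd : (2 ^ s - 1) ∣ (2 ^ (3 * s) - 1) := by
    rw [mul_comm, pow_mul]
    simpa using Nat.sub_dvd_pow_sub_pow (2 ^ s) 1 3
  have h2 := IsCyclic.card_powMonoidHom_ker Fˣ (2 ^ s - 1)
  rw [Nat.card_eq_fintype_card (α := Fˣ), Fintype.card_units, hF, Nat.gcd_eq_right hd] at h2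
  have h0 : (0 : F) ∈ EE (iterateFrobenius F 2 s) := by rw [mem_EE]; simp
  rw [← Finset.card_erase_add_one h0]
  have h3 : ((EE (iterateFrobenius F 2 s)).erase 0).card = 2 ^ s - 1 := by
    rw [← h2, Nat.card_eq_fintype_card, Fintype.card]
    symm
    refine Finset.card_bij
      (fun (x : (powMonoidHom (2 ^ s - 1) : Fˣ →* Fˣ).ker) _ => ((x : Fˣ) : F)) ?_ ?_ ?_
    · rintro ⟨x, hx⟩ _
      rw [MonoidHom.mem_ker, powMonoidHom_apply] at hx
      simp only [Finset.mem_erase, mem_EE, iterateFrobenius_def, ne_eq, Units.ne_zero,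
        not_false_eq_true, true_and]
      have : (x : F) ^ (2 ^ s - 1) = 1 := by
        rw [← Units.val_pow_eq_pow_val, hx, Units.val_one]
      calc (x : F) ^ 2 ^ s = (x : F) ^ (2 ^ s - 1 + 1) := by rw [Nat.sub_add_cancel h1]
        _ = (x : F) := by rw [pow_succ, this, one_mul]
    · rintro ⟨x, hx⟩ _ ⟨y, hy⟩ _ h
      simpa [Units.ext_iff] using h
    · intro x hx
      simp only [Finset.mem_erase, mem_EE, iterateFrobenius_def] at hx
      refine ⟨⟨Units.mk0 x hx.1, ?_⟩, Finset.mem_univ _, rfl⟩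
      rw [MonoidHom.mem_ker, powMonoidHom_apply]
      ext
      simp only [Units.val_pow_eq_pow_val, Units.val_mk0, Units.val_one]
      apply mul_right_cancel₀ hx.1
      rw [← pow_succ, Nat.sub_add_cancel h1, hx.2, one_mul]
  rw [h3, Nat.sub_add_cancel h1]

lemma trFE_eq (F : Type*) [Field F] [CharP F 2] (s : ℕ) (x : F) :
    trFE s x = tt (iterateFrobenius F 2 s) x := by
  simp only [trFE, tt, iterateFrobenius_def]
  rw [← pow_mul, ← pow_add, two_mul]

lemma Sa_ncard (F : Type*) [Field F] [Fintype F] [CharP F 2] (s : ℕ) (ω : F) (a : ℤ) :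
    (Sa s ω a).ncard = NN (iterateFrobenius F 2 s) (ω ^ a) := by
  classical
  rw [NN, ← Set.ncard_coe_finset]
  congr 1
  ext u
  simp only [Sa, Set.mem_ofPred_eq, Finset.coe_filter, mem_OO, trFE_eq, iterateFrobenius_def,
    pow_succ', and_assoc]

/-- `ω^a` is fixed iff `M ∣ a`. -/
lemma omega_fix (F : Type*) [Field F] [Fintype F] [CharP F 2] (s : ℕ) (hs : 1 ≤ s)
    (hF : Fintype.card F = 2 ^ (3 * s)) (ω : F) (hω0 : ω ≠ 0)
    (hωgen : ∀ x : F, x ≠ 0 → ∃ n : ℕ, x = ω ^ n) (a : ℤ) :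
    iterateFrobenius F 2 s (ω ^ a) = ω ^ a ↔ (a : ZMod (Mof s)) = 0 := by
  classical
  set w := Units.mk0 ω hω0 with hw
  have hord : orderOf w = 2 ^ (3 * s) - 1 := by
    rw [orderOf_eq_card_of_forall_mem_zpowers (g := w), Nat.card_eq_fintype_card,
      Fintype.card_units, hF]
    intro x
    obtain ⟨n, hn⟩ := hωgen x x.ne_zero
    refine ⟨n, ?_⟩
    ext
    simp [hw, hn]
  have hM : ((2 ^ (3 * s) - 1 : ℕ) : ℤ) = (2 ^ s - 1) * (Mof s : ℤ) := by
    have : 1 ≤ 2 ^ (3 * s) := Nat.one_le_two_pow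
    push_cast [Mof, Nat.cast_sub this]
    rw [mul_comm 3 s, pow_mul, mul_comm 2 s, pow_mul]; ring
  have hpos : ((2 : ℤ) ^ s - 1) ≠ 0 := by
    have : (2 : ℤ) ^ 1 ≤ 2 ^ s := pow_le_pow_right₀ (by norm_num) hs
    omega
  rw [ZMod.intCast_zmod_eq_zero_iff_dvd]
  have e1 : iterateFrobenius F 2 s (ω ^ a) = ω ^ a ↔ w ^ (a * (2 ^ s - 1)) = 1 := by
    rw [iterateFrobenius_def, mul_sub, mul_one, zpow_sub, mul_inv_eq_one, zpow_mul, Units.ext_iff]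
    have : ((2 : ℤ) ^ s) = ((2 ^ s : ℕ) : ℤ) := by push_cast; rfl
    rw [this, zpow_natCast]
    simp [hw]
  rw [e1, ← orderOf_dvd_iff_zpow_eq_one, hord, hM, mul_comm a]
  exact mul_dvd_mul_iff_left hpos

lemma NN_mod (F : Type*) [Field F] [Fintype F] [CharP F 2] (s : ℕ) (hs : 1 ≤ s)
    (hF : Fintype.card F = 2 ^ (3 * s)) (ω : F) (hω0 : ω ≠ 0)
    (hωgen : ∀ x : F, x ≠ 0 → ∃ n : ℕ, x = ω ^ n) (a b : ℤ)
    (hab : (a : ZMod (Mof s)) = b) :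
    NN (iterateFrobenius F 2 s) (ω ^ a) = NN (iterateFrobenius F 2 s) (ω ^ b) := by
  have h1 : ω ^ a = ω ^ b * ω ^ (a - b) := by rw [← zpow_add₀ hω0]; congr 1; ring
  have h2 : iterateFrobenius F 2 s (ω ^ (a - b)) = ω ^ (a - b) := by
    rw [omega_fix F s hs hF ω hω0 hωgen]; push_cast; rw [hab, sub_self]
  classical
  rw [h1]
  unfold NN
  congr 1
  ext u
  rw [Finset.mem_filter, Finset.mem_filter, mul_comm (ω ^ b), mul_assoc, tt_smul _ h2]
  simp [zpow_ne_zero _ hω0]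

lemma val_cast (s : ℕ) (x : ZMod (Mof s)) : (((x.val : ℤ)) : ZMod (Mof s)) = x := by
  have : NeZero (Mof s) := ⟨by simp [Mof]⟩
  simp

end concrete

/-- Everything about the extension `G/F` that is needed. -/
lemma psiSum_class (s : ℕ) (hs : 1 ≤ s) (F G : Type*) [Field F] [Fintype F]
    [CharP F 2] [Field G] [Fintype G] [Algebra (ZMod 2) G]
    (hF : Fintype.card F = 2 ^ (3 * s))
    (γ : G) (hγ0 : γ ≠ 0) (hγ : ∀ x : G, x ≠ 0 → ∃ n : ℕ, x = γ ^ n)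
    (ω : F) (hω0 : ω ≠ 0) (N : G → F) (hN : ∀ n : ℤ, N (γ ^ n) = ω ^ n)
    (hωgen : ∀ x : F, x ≠ 0 → ∃ n : ℕ, x = ω ^ n) (c : G) (k : ℕ)
    (T : Set (ZMod (Mof s))) (hT : ∀ x : ZMod (Mof s), x ∈ T ↔ (Sa s ω (x.val : ℤ)).ncard = k) :
    open scoped Classical in
    psiSum G c (Rclass s γ T) = ∑ x, if x ≠ 0 ∧ NN (iterateFrobenius F 2 s) (N x) = k
      then psi G (c * x) else 0 := by
  classical
  have hset : Rclass s γ T =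
      ((Finset.univ.filter (fun x : G => x ≠ 0 ∧ NN (iterateFrobenius F 2 s) (N x) = k) :
        Finset G) : Set G) := by
    ext x
    simp only [Rclass, cyc, Set.mem_iUnion, Set.mem_ofPred_eq, Finset.coe_filter, Finset.mem_univ,
      true_and]
    constructor
    · rintro ⟨i, hi, t, rfl⟩
      refine ⟨zpow_ne_zero _ hγ0, ?_⟩
      rw [hT, Sa_ncard] at hi
      rw [hN, ← hi]
      apply NN_mod F s hs hF ω hω0 hωgen
      rw [Int.cast_add, Int.cast_mul, Int.cast_natCast (Mof s), ZMod.natCast_self, zero_mul,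
        add_zero]
    · rintro ⟨hx, hk⟩
      obtain ⟨n, rfl⟩ := hγ x hx
      have hcast : ((((n : ZMod (Mof s)).val : ℤ)) : ZMod (Mof s)) = ((n : ℤ) : ZMod (Mof s)) := by
        rw [val_cast]; simp
      refine ⟨(n : ZMod (Mof s)), ?_, ?_⟩
      · rw [hT, Sa_ncard, NN_mod F s hs hF ω hω0 hωgen _ (n : ℤ) hcast, ← hN, zpow_natCast, hk]
      · obtain ⟨t, ht⟩ := (ZMod.intCast_eq_intCast_iff_dvd_sub _ _ _).mp hcast
        refine ⟨t, ?_⟩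
        rw [← ht, ← zpow_natCast]
        congr 1; ring
  rw [psiSum, hset, finsum_mem_coe_finset, Finset.sum_filter]

open scoped Classical in
/-- The three sums, concretely. -/
lemma concrete_sums (s : ℕ) (hs : 1 ≤ s) (F G : Type*) [Field F] [Fintype F] [Algebra (ZMod 2) F]
    [CharP F 2] [Field G] [Fintype G] [Algebra (ZMod 2) G]
    (hF : Fintype.card F = 2 ^ (3 * s)) (hG : Fintype.card G = 2 ^ (6 * s))
    (f : F →+* G) (γ : G) (hγ : ∀ x : G, x ≠ 0 → ∃ n : ℕ, x = γ ^ n) (hγ0 : γ ≠ 0)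
    (ω : F) (hω : f ω = γ ^ (2 ^ (3 * s) + 1))
    (hωgen : ∀ x : F, x ≠ 0 → ∃ n : ℕ, x = ω ^ n) :
    ∃ N : G → F, (∀ n : ℤ, N (γ ^ n) = ω ^ n) ∧
    ∀ c : G, c ≠ 0 → ∀ S : ℕ → ℤ,
      (∀ k, S k = ∑ x, if x ≠ 0 ∧ NN (iterateFrobenius F 2 s) (N x) = k * (2 ^ s - 1)
        then psi G (c * x) else 0) →
      (S 1 = (2 ^ s) ^ 2 - 1 -
        if tt (iterateFrobenius F 2 s) (N c) = 0 then ((2 : ℤ) ^ s) ^ 3 else 0) ∧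
      S 0 + S 1 + S 2 = -1 ∧
      S 1 + 2 * S 2 = if iterateFrobenius F 2 s (N c) = N c
        then (2 ^ s + 1) * ((2 ^ s) ^ 2 - 1 - (2 ^ s) ^ 3 : ℤ)
        else (2 ^ s) ^ 2 - 2 ^ s - 1 := by
  let : Algebra F G := f.toAlgebra
  have : CharP G 2 := charP_of_injective_algebraMap (algebraMap (ZMod 2) G).injective 2
  have : IsScalarTower (ZMod 2) F G := IsScalarTower.of_algebraMap_eq' (Subsingleton.elim _ _)
  have hfa : ∀ x, algebraMap F G x = f x := fun _ => rfl
  have hinj : Function.Injective f := f.injective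
  have hrank : Module.finrank F G = 2 := by
    have h := Module.card_eq_pow_finrank (K := F) (V := G)
    rw [hF, hG, ← pow_mul] at h
    have h' := Nat.pow_right_injective (le_refl 2) h
    have : (3 * s) * 2 = (3 * s) * Module.finrank F G := by rw [← h']; ring
    exact (Nat.eq_of_mul_eq_mul_left (by omega) this).symm
  set br := iterateFrobenius G 2 (3 * s) with hbrdef
  have hbrbr : ∀ x, br (br x) = x := by
    intro x
    rw [hbrdef, iterateFrobenius_def, iterateFrobenius_def, ← pow_mul, ← pow_add,
      show 3 * s + 3 * s = 6 * s by ring, ← hG]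
    exact FiniteField.pow_card x
  have hbrf : ∀ l, br (f l) = f l := by
    intro l
    rw [hbrdef, iterateFrobenius_def, ← map_pow, ← hF, FiniteField.pow_card]
  have hN : ∀ x, f (Algebra.norm F x) = x * br x := by
    intro x
    rw [← hfa, FiniteField.algebraMap_norm_eq_prod_pow, hrank, Nat.card_eq_fintype_card, hF]
    simp [Finset.prod_range_succ, hbrdef, iterateFrobenius_def]
  have hT : ∀ x, f (Algebra.trace F G x) = x + br x := by
    intro x
    rw [← hfa, FiniteField.algebraMap_trace_eq_sum_pow, hrank, Nat.card_eq_fintype_card, hF]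
    simp [Finset.sum_range_succ, hbrdef, iterateFrobenius_def]
  have hpsi : ∀ x, psi G x = psi F (Algebra.trace F G x) := by
    intro x; unfold psi; rw [Algebra.trace_trace]
  have hNγ : Algebra.norm F γ = ω := by
    apply hinj
    rw [hN, hω, hbrdef, iterateFrobenius_def, pow_succ']
  have hNγn : ∀ n : ℤ, Algebra.norm F (γ ^ n) = ω ^ n := by
    intro n
    apply hinj
    rw [hN, map_zpow₀ br, map_zpow₀ f, ← hNγ, hN, mul_zpow]
  have hN0 : ∀ x : G, Algebra.norm F x = 0 ↔ x = 0 := fun x => Algebra.norm_eq_zero_iff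
  refine ⟨fun x => Algebra.norm F x, hNγn, ?_⟩
  intro c hc S hS
  have hq : 2 ≤ 2 ^ s := by
    calc 2 = 2 ^ 1 := rfl
      _ ≤ 2 ^ s := Nat.pow_le_pow_right (by norm_num) hs
  have hF' : Fintype.card F = (2 ^ s) ^ 3 := by rw [hF, mul_comm, pow_mul]
  have h3 : ∀ x, iterateFrobenius F 2 s (iterateFrobenius F 2 s (iterateFrobenius F 2 s x)) = x := by
    intro x
    simp only [iterateFrobenius_def]
    rw [← pow_mul, ← pow_mul, ← pow_add, ← pow_add, show s + (s + s) = 3 * s by ring, ← hF]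
    exact FiniteField.pow_card x
  obtain ⟨x1, hx1⟩ := psi_ne G
  have hsum : ∑ x, psi G (c * x) = 0 :=
    addchar_sum_zero (fun x => psi G (c * x)) (fun x y => by rw [mul_add, psi_add])
      ⟨c⁻¹ * x1, by simpa [mul_inv_cancel_left₀ hc] using hx1⟩
  have hgauss := gauss_sum (G := G) (psi F) (psi_add F) (psi_zero F) (psi_sq F) (psi_ne F)
    (fun x => Algebra.norm F x) (fun x => Algebra.trace F G x) f br
    (fun c l => by rw [map_mul, hbrbr, hbrf])
    (fun x y => map_mul _ x y) hN0
    (fun l => hinj (by rw [hN, hbrf, map_pow, pow_two]))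
    (fun x => hinj (by rw [hN, hN, hbrbr, mul_comm]))
    (fun y => by
      by_cases hy : y = 0
      · exact ⟨0, by rw [hy]; exact (hN0 0).mpr rfl⟩
      · obtain ⟨n, rfl⟩ := hωgen y hy
        exact ⟨γ ^ n, by simp [hNγ]⟩)
    (fun x d => hinj (by
      simp only [map_add, hN, hT, map_mul, hbrbr]; ring))
    (fun l x => hinj (by
      simp only [map_mul, hT, hbrf]; ring))
    (fun x y => map_add _ x y)
    ⟨x1, by rw [← hpsi]; exact hx1⟩
    (((2 ^ s : ℕ) : ℤ) ^ 3)
    (by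
      have : (1 : ℤ) < ((2 ^ s : ℕ) : ℤ) := by exact_mod_cast hq
      exact one_lt_pow₀ this (by norm_num))
    (by rw [hF']; push_cast; ring)
    (by rw [hG]; push_cast; rw [← pow_mul, ← pow_mul]; congr 1; ring)
    c hc
  have := final_sums (G := G) (iterateFrobenius F 2 s) h3 (2 ^ s) hq (card_EE F s hs hF) hF'
    (psi F) (psi_add F) (psi_zero F)
    (fun x => by rw [iterateFrobenius_def]; exact psi_frob F s x) (psi_sq F) (psi_ne F)
    (fun x => Algebra.norm F x) (psi G) (psi_zero G) hN0 c hsum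
    (fun l => by rw [← hgauss l]; simp only [hpsi]) S hS
  push_cast at this
  exact this

theorem statement16 (s : ℕ) (hs : 1 ≤ s) (F G : Type*) [Field F] [Fintype F] [Algebra (ZMod 2) F]
    [Field G] [Fintype G] [Algebra (ZMod 2) G]
    (hF : Fintype.card F = 2 ^ (3 * s)) (hG : Fintype.card G = 2 ^ (6 * s))
    (f : F →+* G) (γ : G) (hγ : ∀ x : G, x ≠ 0 → ∃ n : ℕ, x = γ ^ n)
    (ω : F) (hω : f ω = γ ^ (2 ^ (3 * s) + 1))
    (hωgen : ∀ x : F, x ≠ 0 → ∃ n : ℕ, x = ω ^ n) :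
    ∀ a : ℤ,
      ((a : ZMod (Mof s)) ∈ T1 s ω →
        psiSum G (γ ^ a) (Rclass s γ (T1 s ω)) = -(2 ^ (3 * s)) + 2 ^ (2 * s) - 1) ∧
      ((a : ZMod (Mof s)) ∉ T1 s ω →
        psiSum G (γ ^ a) (Rclass s γ (T1 s ω)) = 2 ^ (2 * s) - 1) ∧
      ((a : ZMod (Mof s)) = 0 →
        psiSum G (γ ^ a) (Rclass s γ (T2 s ω)) =
          2 ^ (s - 1) * (2 ^ s + 1) * (-(2 ^ (2 * s)) + 2 ^ s - 1)) ∧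
      ((a : ZMod (Mof s)) ∈ T1 s ω →
        psiSum G (γ ^ a) (Rclass s γ (T2 s ω)) = 2 ^ (s - 1) * (2 ^ (2 * s) - 1)) ∧
      ((a : ZMod (Mof s)) ≠ 0 → (a : ZMod (Mof s)) ∉ T1 s ω →
        psiSum G (γ ^ a) (Rclass s γ (T2 s ω)) = -(2 ^ (s - 1))) ∧
      ((a : ZMod (Mof s)) = 0 →
        psiSum G (γ ^ a) (Rclass s γ (T3 s ω)) =
          2 ^ (s - 1) * (2 ^ s - 1) * (2 ^ (2 * s) + 2 ^ s - 1)) ∧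
      ((a : ZMod (Mof s)) ∈ T1 s ω →
        psiSum G (γ ^ a) (Rclass s γ (T3 s ω)) = 2 ^ (s - 1) * (2 ^ s - 1) ^ 2) ∧
      ((a : ZMod (Mof s)) ≠ 0 → (a : ZMod (Mof s)) ∉ T1 s ω →
        psiSum G (γ ^ a) (Rclass s γ (T3 s ω)) = 2 ^ (s - 1) * (1 - 2 ^ (s + 1))) := by

  classical
  have : CharP F 2 := charP_of_injective_algebraMap (algebraMap (ZMod 2) F).injective 2
  have hω0 : ω ≠ 0 := by
    rintro rfl
    have h1 : γ = 0 := by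
      rw [map_zero] at hω
      exact pow_eq_zero_iff (by positivity) |>.mp hω.symm
    have hcard : 2 < Fintype.card F := by
      rw [hF]
      calc 2 < 2 ^ 3 := by norm_num
        _ ≤ 2 ^ (3 * s) := Nat.pow_le_pow_right (by norm_num) (by omega)
    obtain ⟨x, hx0, hx1⟩ : ∃ x : F, x ≠ 0 ∧ x ≠ 1 := by
      by_contra! hcon
      have : (Finset.univ : Finset F) ⊆ {0, 1} := by
        intro x _
        by_cases hx : x = 0
        · simp [hx]
        · simp [hcon x hx]
      have h2 := Finset.card_le_card this
      rw [Finset.card_univ] at h2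
      have h3 := Finset.card_le_two (a := (0 : F)) (b := 1)
      omega
    obtain ⟨n, hn⟩ := hωgen x hx0
    cases n with
    | zero => exact hx1 (by simpa using hn)
    | succ n => exact hx0 (by simpa using hn)
  have hγ0 : γ ≠ 0 := by
    rintro rfl
    rw [zero_pow (by positivity)] at hω
    exact hω0 (by simpa using hω)
  obtain ⟨N, hNγ, hmain⟩ := concrete_sums s hs F G hF hG f γ hγ hγ0 ω hω hωgen
  have hq : 2 ≤ 2 ^ s := by
    calc 2 = 2 ^ 1 := rfl
      _ ≤ 2 ^ s := Nat.pow_le_pow_right (by norm_num) hs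
  have hF' : Fintype.card F = (2 ^ s) ^ 3 := by rw [hF, mul_comm, pow_mul]
  have h3 : ∀ x, iterateFrobenius F 2 s (iterateFrobenius F 2 s (iterateFrobenius F 2 s x)) = x := by
    intro x
    simp only [iterateFrobenius_def]
    rw [← pow_mul, ← pow_mul, ← pow_add, ← pow_add, show s + (s + s) = 3 * s by ring, ← hF]
    exact FiniteField.pow_card x
  intro a
  have hc : γ ^ a ≠ 0 := zpow_ne_zero _ hγ0
  obtain ⟨m1, m2, m3⟩ := hmain (γ ^ a) hc
    (fun k => ∑ x, if x ≠ 0 ∧ NN (iterateFrobenius F 2 s) (N x) = k * (2 ^ s - 1)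
        then psi G (γ ^ a * x) else 0) (fun k => rfl)
  have c1 := psiSum_class s hs F G hF γ hγ0 hγ ω hω0 N hNγ hωgen (γ ^ a) (1 * (2 ^ s - 1))
    (T1 s ω) (by intro x; rw [one_mul]; rfl)
  have c2 := psiSum_class s hs F G hF γ hγ0 hγ ω hω0 N hNγ hωgen (γ ^ a) (2 * (2 ^ s - 1))
    (T2 s ω) (by intro x; rfl)
  have c3 := psiSum_class s hs F G hF γ hγ0 hγ ω hω0 N hNγ hωgen (γ ^ a) (0 * (2 ^ s - 1))
    (T3 s ω) (by intro x; rw [zero_mul]; rfl)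
  simp only [← c1, ← c2, ← c3] at m1 m2 m3
  rw [hNγ] at m1 m3
  have hT1 : (a : ZMod (Mof s)) ∈ T1 s ω ↔ tt (iterateFrobenius F 2 s) (ω ^ a) = 0 := by
    have h1 : (a : ZMod (Mof s)) ∈ T1 s ω ↔
        NN (iterateFrobenius F 2 s) (ω ^ a) = 2 ^ s - 1 := by
      rw [← NN_mod F s hs hF ω hω0 hωgen ((a : ZMod (Mof s)).val : ℤ) a (val_cast s _), ← Sa_ncard]
      rfl
    rw [h1]
    constructor
    · intro h
      by_contra hne
      have := NN_other (iterateFrobenius F 2 s) h3 (2 ^ s) hq (card_EE F s hs hF) hF' hne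
      omega
    · intro h
      have := NN_tangent (iterateFrobenius F 2 s) h3 (2 ^ s) hq (card_EE F s hs hF) hF'
        (zpow_ne_zero a hω0) h
      omega
  have hfix := omega_fix F s hs hF ω hω0 hωgen a
  have hfixT : (a : ZMod (Mof s)) = 0 → (a : ZMod (Mof s)) ∉ T1 s ω := by
    intro h
    rw [hT1, tt_of_fix _ (hfix.mpr h)]
    exact zpow_ne_zero a hω0
  rw [hfix] at m3
  rw [← hT1] at m1
  generalize psiSum G (γ ^ a) (Rclass s γ (T1 s ω)) = S1 at *
  generalize psiSum G (γ ^ a) (Rclass s γ (T2 s ω)) = S2 at *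
  generalize psiSum G (γ ^ a) (Rclass s γ (T3 s ω)) = S3 at *
  have p0 : (2 : ℤ) ^ s = 2 * 2 ^ (s - 1) := by
    rw [← pow_succ', Nat.sub_add_cancel hs]
  have p2 : (2 : ℤ) ^ (2 * s) = (2 ^ s) ^ 2 := by rw [mul_comm, pow_mul]
  have p3 : (2 : ℤ) ^ (3 * s) = (2 ^ s) ^ 3 := by rw [mul_comm, pow_mul]
  have p4 : (2 : ℤ) ^ (s + 1) = 2 * 2 ^ s := by rw [pow_succ']
  rw [p4, p3, p2]
  rw [p0] at m1 m3 ⊢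
  generalize (2 : ℤ) ^ (s - 1) = h at *
  have two : (2 : ℤ) ≠ 0 := by norm_num
  refine ⟨fun hh => ?_, fun hh => ?_, fun hh => ?_, fun hh => ?_, fun hh hh' => ?_, fun hh => ?_,
    fun hh => ?_, fun hh hh' => ?_⟩
  · rw [if_pos hh] at m1; linear_combination m1
  · rw [if_neg hh] at m1; linear_combination m1
  · rw [if_neg (hfixT hh)] at m1
    rw [if_pos hh] at m3
    apply mul_left_cancel₀ two
    linear_combination m3 - m1
  · rw [if_pos hh] at m1
    rw [if_neg (fun h0 => hfixT h0 hh)] at m3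
    apply mul_left_cancel₀ two
    linear_combination m3 - m1
  · rw [if_neg hh'] at m1
    rw [if_neg hh] at m3
    apply mul_left_cancel₀ two
    linear_combination m3 - m1
  · rw [if_neg (hfixT hh)] at m1
    rw [if_pos hh] at m3
    apply mul_left_cancel₀ two
    linear_combination 2 * m2 - m3 - m1
  · rw [if_pos hh] at m1
    rw [if_neg (fun h0 => hfixT h0 hh)] at m3
    apply mul_left_cancel₀ two
    linear_combination 2 * m2 - m3 - m1
  · rw [if_neg hh'] at m1
    rw [if_neg hh] at m3
    apply mul_left_cancel₀ two
    linear_combination 2 * m2 - m3 - m1
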